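/- On I₀ = (0,∞)∖{1}: p₀ is strictly positive, the function g(z) = z·R(z) / ((z−1)·√(p₀(z))) (real square root) never vanishes, the image g(I₀) equals ℝ∖{0}, and g(z) → 0 both as z → 0⁺ and as z → ∞. -/

import Mathlib

open Polynomial Matrix

/-- The matrix `A_m(z)` with rows `(z + α β⁻¹, α + β)` and `(z(α⁻¹+β⁻¹), z + β α⁻¹)`. -/
noncomputable def aztecA (a b : ℝ) (z : ℂ) : Matrix (Fin 2) (Fin 2) ℂ :=
  !![z + (a : ℂ) * ((b : ℂ))⁻¹, (a : ℂ) + (b : ℂ);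
     z * (((a : ℂ))⁻¹ + ((b : ℂ))⁻¹), z + (b : ℂ) * ((a : ℂ))⁻¹]

/-- `T(z) = A_1(z) A_2(z) ⋯ A_k(z)`. -/
noncomputable def aztecT {k : ℕ} (α β : Fin k → ℝ) (z : ℂ) : Matrix (Fin 2) (Fin 2) ℂ :=
  (List.ofFn fun m => aztecA (α m) (β m) z).prod
open Filter

/-- The function `g(z) = z R(z) / ((z−1) √(p₀(z)))`, which up to sign is `z ρ₁′(z)/ρ₁(z)`. -/
noncomputable def aztecg (R p₀ : Polynomial ℝ) (z : ℝ) : ℝ :=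
  z * R.eval z / ((z - 1) * Real.sqrt (p₀.eval z))

/-!
Differentiating the eigenvalue equation of `Φ = (z - 1)⁻ᵏ T` leads to the combination
`(z - 1) t' - k t` of the trace `t` of `T` and its derivative, which is minus the polar derivative
of `t` with respect to `1`. Polar derivatives obey the Leibniz rule, and that of an entry of `A_m`,
a polynomial of degree at most one, is the constant equal to its value at `1`, which is positive.
The polar derivative of `t` is therefore positive on `(0, ∞)`, and `R`, which divides it, has no
root there.

Since `p₀` has no root in `(0, ∞)` either, `1 / g = (z - 1) √p₀ / (z R)` is continuous on all of
`(0, ∞)` and vanishes only at `1`. As `g` tends to `0` with opposite signs at the two ends, `1 / g`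
takes every real value, and its nonzero values are the inverses of those of `g` on `I₀`.
-/

section PolarDerivative

section Ring

variable {A : Type*} [CommRing A]

/-- The polar derivative `n f + (a - X) f'` with respect to `a` of a polynomial `f` regarded as
having degree `n`; up to the factor `-(X - a) ^ (n + 1)` it is the derivative of
`f / (X - a) ^ n`. -/
noncomputable def polarDerivative (a : A) (n : ℕ) (f : A[X]) : A[X] :=
  C (n : A) * f + (C a - X) * derivative f

theorem polarDerivative_sum {ι : Type*} (a : A) (n : ℕ) (s : Finset ι) (f : ι → A[X]) :
    polarDerivative a n (∑ i ∈ s, f i) = ∑ i ∈ s, polarDerivative a n (f i) := by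
  simp only [polarDerivative, derivative_sum, Finset.mul_sum, Finset.sum_add_distrib]

theorem polarDerivative_mul (a : A) (m n : ℕ) (f g : A[X]) :
    polarDerivative a (m + n) (f * g) =
      polarDerivative a m f * g + f * polarDerivative a n g := by
  simp only [polarDerivative, derivative_mul, Nat.cast_add, C_add]
  ring

theorem polarDerivative_one_of_natDegree_le_one (a : A) {f : A[X]} (hf : f.natDegree ≤ 1) :
    polarDerivative a 1 f = C (f.eval a) := by
  obtain ⟨b, c, rfl⟩ := exists_eq_X_add_C_of_natDegree_le_one hf
  simp only [polarDerivative, Nat.cast_one, C_1, derivative_add, derivative_C_mul, derivative_X,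
    derivative_C, eval_add, eval_mul, eval_C, eval_X, C_add, C_mul]
  ring

end Ring

variable {A : Type*} [CommRing A] [LinearOrder A] {a z : A} {m n : ℕ}

/-- At `z`, both `f` and its polar derivative with respect to `a` are positive, `f` being regarded
as a polynomial of degree `n`. -/
structure PolarPosAt (a z : A) (n : ℕ) (f : A[X]) : Prop where
  eval_pos : 0 < f.eval z
  eval_polarDerivative_pos : 0 < (polarDerivative a n f).eval z

theorem PolarPosAt.of_natDegree_le_one {f : A[X]} (hf : f.natDegree ≤ 1) (hz : 0 < f.eval z)
    (ha : 0 < f.eval a) : PolarPosAt a z 1 f where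
  eval_pos := hz
  eval_polarDerivative_pos := by rwa [polarDerivative_one_of_natDegree_le_one a hf, eval_C]

variable [IsStrictOrderedRing A]

theorem PolarPosAt.sum {ι : Type*} {s : Finset ι} (hs : s.Nonempty) {f : ι → A[X]}
    (hf : ∀ i ∈ s, PolarPosAt a z n (f i)) : PolarPosAt a z n (∑ i ∈ s, f i) where
  eval_pos := by
    rw [eval_finsetSum]
    exact Finset.sum_pos (fun i hi => (hf i hi).eval_pos) hs
  eval_polarDerivative_pos := by
    rw [polarDerivative_sum, eval_finsetSum]
    exact Finset.sum_pos (fun i hi => (hf i hi).eval_polarDerivative_pos) hs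

theorem PolarPosAt.mul {f g : A[X]} (hf : PolarPosAt a z m f) (hg : PolarPosAt a z n g) :
    PolarPosAt a z (m + n) (f * g) where
  eval_pos := by
    rw [eval_mul]
    exact mul_pos hf.eval_pos hg.eval_pos
  eval_polarDerivative_pos := by
    rw [polarDerivative_mul, eval_add, eval_mul, eval_mul]
    exact add_pos (mul_pos hf.eval_polarDerivative_pos hg.eval_pos)
      (mul_pos hf.eval_pos hg.eval_polarDerivative_pos)

variable {ι : Type*} [Fintype ι] [DecidableEq ι] [Nonempty ι]

theorem PolarPosAt.list_prod {l : List (Matrix ι ι A[X])} (hl : l ≠ [])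
    (h : ∀ M ∈ l, ∀ i j, PolarPosAt a z 1 (M i j)) (i j : ι) :
    PolarPosAt a z l.length (l.prod i j) := by
  induction l generalizing i j with
  | nil => exact absurd rfl hl
  | cons M l ih =>
    rw [List.forall_mem_cons] at h
    rcases eq_or_ne l [] with rfl | hne
    · simpa using h.1 i j
    · rw [List.prod_cons, Matrix.mul_apply, List.length_cons, add_comm]
      exact .sum Finset.univ_nonempty fun c _ => (h.1 i c).mul (ih hne h.2 c j)

end PolarDerivative

section Trace

/-- The matrix `A_m` as a matrix of real polynomials in `z`. -/
noncomputable def aztecPolyA (a b : ℝ) : Matrix (Fin 2) (Fin 2) ℝ[X] :=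
  !![X + C (a * b⁻¹), C (a + b); X * C (a⁻¹ + b⁻¹), X + C (b * a⁻¹)]

theorem mapMatrix_aeval_aztecPolyA (a b : ℝ) (z : ℂ) :
    (aeval z).mapMatrix (aztecPolyA a b) = aztecA a b z := by
  ext i j
  fin_cases i <;> fin_cases j <;> simp [aztecPolyA, aztecA]

theorem natDegree_aztecPolyA_le (a b : ℝ) (i j : Fin 2) : (aztecPolyA a b i j).natDegree ≤ 1 := by
  fin_cases i <;> fin_cases j <;> simp only [aztecPolyA, Fin.zero_eta, Fin.mk_one, of_apply,
    cons_val', cons_val_zero, cons_val_one, cons_val_fin_one] <;> compute_degree!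

theorem eval_aztecPolyA_pos {a b z : ℝ} (ha : 0 < a) (hb : 0 < b) (hz : 0 < z) (i j : Fin 2) :
    0 < (aztecPolyA a b i j).eval z := by
  fin_cases i <;> fin_cases j <;> simp only [aztecPolyA, Fin.zero_eta, Fin.mk_one, of_apply,
    cons_val', cons_val_zero, cons_val_one, cons_val_fin_one, eval_add, eval_mul, eval_X,
    eval_C] <;> positivity

theorem polarPosAt_aztecPolyA {a b z : ℝ} (ha : 0 < a) (hb : 0 < b) (hz : 0 < z) (i j : Fin 2) :
    PolarPosAt 1 z 1 (aztecPolyA a b i j) :=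
  .of_natDegree_le_one (natDegree_aztecPolyA_le a b i j) (eval_aztecPolyA_pos ha hb hz i j)
    (eval_aztecPolyA_pos ha hb one_pos i j)

variable {k : ℕ}

/-- The matrix `T` as a matrix of real polynomials in `z`. -/
noncomputable def aztecPolyT (α β : Fin k → ℝ) : Matrix (Fin 2) (Fin 2) ℝ[X] :=
  (List.ofFn fun m => aztecPolyA (α m) (β m)).prod

theorem aeval_trace_aztecPolyT (α β : Fin k → ℝ) (z : ℂ) :
    aeval z (aztecPolyT α β).trace = (aztecT α β z).trace := by
  have hmap : (aeval z).mapMatrix (aztecPolyT α β) = aztecT α β z := by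
    simp only [aztecPolyT, aztecT, map_list_prod, List.map_ofFn, Function.comp_def,
      mapMatrix_aeval_aztecPolyA]
  rw [AddMonoidHom.map_trace, ← hmap]
  rfl

theorem eq_of_forall_aeval_eq {A B : Type*} [CommRing A] [IsDomain A] [Infinite A] [Semiring B]
    [Algebra A B] [FaithfulSMul A B] {f g : A[X]} (h : ∀ z : B, aeval z f = aeval z g) : f = g :=
  Polynomial.funext fun r => FaithfulSMul.algebraMap_injective A B <| by
    simpa only [aeval_algebraMap_apply_eq_algebraMap_eval] using h (algebraMap A B r)

theorem polarPosAt_trace_aztecPolyT (hk : 1 ≤ k) {α β : Fin k → ℝ} (hα : ∀ m, 0 < α m)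
    (hβ : ∀ m, 0 < β m) {z : ℝ} (hz : 0 < z) :
    PolarPosAt 1 z k (aztecPolyT α β).trace := by
  have hne : List.ofFn (fun m => aztecPolyA (α m) (β m)) ≠ [] := by
    simpa [List.ofFn_eq_nil_iff] using Nat.one_le_iff_ne_zero.mp hk
  have hentry : ∀ M ∈ List.ofFn (fun m => aztecPolyA (α m) (β m)), ∀ i j,
      PolarPosAt 1 z 1 (M i j) := by
    simpa only [List.forall_mem_ofFn_iff] using
      fun m => polarPosAt_aztecPolyA (hα m) (hβ m) hz
  have hT : ∀ i j, PolarPosAt 1 z k (aztecPolyT α β i j) := by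
    simpa only [List.length_ofFn, aztecPolyT] using PolarPosAt.list_prod hne hentry
  exact .sum Finset.univ_nonempty fun i _ => hT i i

theorem nonpos_of_isRoot_of_dvd_derivative_trace (hk : 1 ≤ k) {α β : Fin k → ℝ}
    (hα : ∀ m, 0 < α m) (hβ : ∀ m, 0 < β m) {t R : ℝ[X]}
    (ht : ∀ z : ℂ, aeval z t = (aztecT α β z).trace)
    (hR : R ∣ (X - 1) * derivative t - C (k : ℝ) * t) {z : ℝ} (hz : R.IsRoot z) : z ≤ 0 := by
  obtain rfl : t = (aztecPolyT α β).trace :=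
    eq_of_forall_aeval_eq fun w : ℂ => (ht w).trans (aeval_trace_aztecPolyT α β w).symm
  by_contra! hpos
  have hpolar : R ∣ polarDerivative 1 k (aztecPolyT α β).trace := by
    rw [← dvd_neg]
    convert hR using 1
    rw [polarDerivative, C_1]
    ring
  exact (polarPosAt_trace_aztecPolyT hk hα hβ hpos).eval_polarDerivative_pos.ne'
    (hz.dvd hpolar)

end Trace

section PolynomialRoots

theorem isRoot_le_of_strictAnti {A : Type*} [CommRing A] [IsDomain A] [Preorder A] {n : ℕ}
    (hn : 0 < n) {f : A[X]} (hf : f ≠ 0) (hdeg : f.natDegree ≤ n) {x : Fin n → A}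
    (hx : StrictAnti x) (hroot : ∀ i, f.eval (x i) = 0) {z : A} (hz : f.IsRoot z) :
    z ≤ x ⟨0, hn⟩ := by
  have hroots : f.roots = (Finset.univ.map ⟨x, hx.injective⟩).val :=
    roots_eq_of_natDegree_le_card_of_ne_zero (by simpa using hroot) (by simpa using hdeg) hf
  obtain ⟨i, rfl⟩ : ∃ i, x i = z := by simpa [hroots] using (mem_roots hf).mpr hz
  exact hx.antitone (Fin.mk_le_of_le_val (Nat.zero_le _))

theorem tendsto_sub_pow_div_eval {𝕜 : Type*} [Field 𝕜] [TopologicalSpace 𝕜]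
    [IsTopologicalDivisionRing 𝕜] {f : 𝕜[X]} {a : 𝕜} {n : ℕ} (hf : ¬ (X - C a) ^ n ∣ f) :
    Tendsto (fun z => (z - a) ^ n / f.eval z) (nhdsWithin a {a}ᶜ) (nhds 0) := by
  have hf0 : f ≠ 0 := by rintro rfl; exact hf (dvd_zero _)
  obtain ⟨g, hfg, hg⟩ := f.exists_eq_pow_rootMultiplicity_mul_and_not_dvd hf0 a
  set m := f.rootMultiplicity a
  have hmn : m < n := by
    by_contra! hnm
    exact hf ((pow_dvd_pow _ hnm).trans ⟨g, hfg⟩)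
  have hga : g.eval a ≠ 0 := by rwa [dvd_iff_isRoot] at hg
  have hlim : Tendsto (fun z => (z - a) ^ (n - m) / g.eval z) (nhds a) (nhds 0) := by
    have hcont : ContinuousAt (fun z => (z - a) ^ (n - m) / g.eval z) a :=
      ContinuousAt.div (by fun_prop) g.continuousAt hga
    simpa [ContinuousAt, (Nat.sub_pos_of_lt hmn).ne'] using hcont
  refine (hlim.mono_left nhdsWithin_le_nhds).congr' ?_
  filter_upwards [self_mem_nhdsWithin] with z hz
  rw [hfg, eval_mul, eval_pow, eval_sub, eval_X, eval_C, ← Nat.add_sub_of_le hmn.le, pow_add,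
    mul_div_mul_left _ _ (pow_ne_zero m (sub_ne_zero.mpr hz)), Nat.add_sub_cancel_left]

end PolynomialRoots

section Aztecg

variable {R p₀ : ℝ[X]}

theorem aztecg_neg (R p₀ : ℝ[X]) (z : ℝ) : aztecg (-R) p₀ z = -aztecg R p₀ z := by
  simp only [aztecg, eval_neg, mul_neg, neg_div]

-- Valid at the pole `z = 1` too, because division by zero gives `aztecg R p₀ 1 = 0`.
theorem inv_aztecg (R p₀ : ℝ[X]) (z : ℝ) :
    (aztecg R p₀ z)⁻¹ = (z - 1) * √(p₀.eval z) / (z * R.eval z) :=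
  inv_div _ _

theorem aztecg_one (R p₀ : ℝ[X]) : aztecg R p₀ 1 = 0 := by
  simp only [aztecg, sub_self, zero_mul, div_zero]

theorem aztecg_sq {z : ℝ} (hz : 0 < p₀.eval z) :
    aztecg R p₀ z ^ 2 = z ^ 2 * R.eval z ^ 2 / ((z - 1) ^ 2 * p₀.eval z) := by
  rw [aztecg, div_pow, mul_pow, mul_pow, Real.sq_sqrt hz.le]

theorem aztecg_ne_zero (hp₀ : ∀ z, 0 < z → 0 < p₀.eval z) (hR : ∀ z, R.IsRoot z → z ≤ 0) {z : ℝ}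
    (hz : z ∈ Set.Ioi (0 : ℝ) \ {1}) : aztecg R p₀ z ≠ 0 :=
  div_ne_zero (mul_ne_zero (ne_of_gt hz.1) fun h => (hR z h).not_gt hz.1)
    (mul_ne_zero (sub_ne_zero.mpr hz.2) (Real.sqrt_pos.mpr (hp₀ z hz.1)).ne')

theorem tendsto_zero_of_tendsto_sq {ι : Type*} {l : Filter ι} {f : ι → ℝ}
    (h : Tendsto (fun i => f i ^ 2) l (nhds 0)) : Tendsto f l (nhds 0) := by
  rw [tendsto_zero_iff_abs_tendsto_zero]
  simpa [Function.comp_def, Real.sqrt_sq_eq_abs] using h.sqrt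

theorem tendsto_aztecg_nhdsGT_zero (hp₀ : ∀ z, 0 < z → 0 < p₀.eval z) (hX : ¬ X ^ 2 ∣ p₀) :
    Tendsto (aztecg R p₀) (nhdsWithin 0 (Set.Ioi 0)) (nhds 0) := by
  have hquot : Tendsto (fun z => z ^ 2 / p₀.eval z) (nhdsWithin 0 (Set.Ioi 0)) (nhds 0) := by
    have h := tendsto_sub_pow_div_eval (f := p₀) (a := 0) (n := 2) (by simpa using hX)
    simpa using h.mono_left (nhdsGT_le_nhdsNE 0)
  have hfactor : ContinuousAt (fun z => R.eval z ^ 2 / (z - 1) ^ 2) 0 :=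
    ContinuousAt.div (by fun_prop) (by fun_prop) (by norm_num)
  have hprod := hquot.mul (hfactor.tendsto.mono_left nhdsWithin_le_nhds)
  rw [zero_mul] at hprod
  refine tendsto_zero_of_tendsto_sq (hprod.congr' ?_)
  filter_upwards [self_mem_nhdsWithin] with z hz
  rw [aztecg_sq (hp₀ z hz), div_mul_div_comm, mul_comm (p₀.eval z)]

theorem tendsto_aztecg_atTop (hp₀ : ∀ z, 0 < z → 0 < p₀.eval z)
    (hdeg : 2 * R.natDegree < p₀.natDegree) : Tendsto (aztecg R p₀) atTop (nhds 0) := by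
  have hp₀0 : p₀ ≠ 0 := by rintro rfl; simp at hdeg
  have hdegree : (X ^ 2 * R ^ 2).degree < ((X - C 1) ^ 2 * p₀).degree := by
    refine degree_lt_degree ?_
    rw [natDegree_mul (pow_ne_zero 2 (X_sub_C_ne_zero 1)) hp₀0, natDegree_pow, natDegree_X_sub_C]
    refine natDegree_mul_le.trans_lt ?_
    rw [natDegree_X_pow, natDegree_pow]
    omega
  refine tendsto_zero_of_tendsto_sq ((div_tendsto_atTop_zero_of_degree_lt _ _ hdegree).congr' ?_)
  filter_upwards [eventually_gt_atTop 0] with z hz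
  simp only [aztecg_sq (hp₀ z hz), eval_mul, eval_pow, eval_sub, eval_X, eval_C]

theorem tendsto_inv_aztecg_nhdsGT_zero (hp₀ : ∀ z, 0 < z → 0 < p₀.eval z)
    (hR : ∀ z, 0 < z → R.eval z < 0) (hX : ¬ X ^ 2 ∣ p₀) :
    Tendsto (aztecg R p₀)⁻¹ (nhdsWithin 0 (Set.Ioi 0)) atTop := by
  have hpos : ∀ᶠ z in nhdsWithin 0 (Set.Ioi 0), aztecg R p₀ z ∈ Set.Ioi 0 := by
    filter_upwards [Ioo_mem_nhdsGT one_pos] with z hz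
    exact div_pos_of_neg_of_neg (mul_neg_of_pos_of_neg hz.1 (hR z hz.1))
      (mul_neg_of_neg_of_pos (sub_neg.mpr hz.2) (Real.sqrt_pos.mpr (hp₀ z hz.1)))
  exact (tendsto_nhdsWithin_iff.mpr
    ⟨tendsto_aztecg_nhdsGT_zero hp₀ hX, hpos⟩).inv_tendsto_nhdsGT_zero

theorem tendsto_inv_aztecg_atTop (hp₀ : ∀ z, 0 < z → 0 < p₀.eval z)
    (hR : ∀ z, 0 < z → R.eval z < 0) (hdeg : 2 * R.natDegree < p₀.natDegree) :
    Tendsto (aztecg R p₀)⁻¹ atTop atBot := by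
  have hneg : ∀ᶠ z in atTop, aztecg R p₀ z ∈ Set.Iio 0 := by
    filter_upwards [eventually_gt_atTop 1] with z hz
    have hz0 : 0 < z := one_pos.trans hz
    exact div_neg_of_neg_of_pos (mul_neg_of_pos_of_neg hz0 (hR z hz0))
      (mul_pos (sub_pos.mpr hz) (Real.sqrt_pos.mpr (hp₀ z hz0)))
  exact (tendsto_nhdsWithin_iff.mpr
    ⟨tendsto_aztecg_atTop hp₀ hdeg, hneg⟩).inv_tendsto_nhdsLT_zero

theorem continuousOn_inv_aztecg (hR : ∀ z, R.IsRoot z → z ≤ 0) :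
    ContinuousOn (aztecg R p₀)⁻¹ (Set.Ioi 0) := by
  have hquot : ContinuousOn (fun z => (z - 1) * √(p₀.eval z) / (z * R.eval z)) (Set.Ioi 0) :=
    ContinuousOn.div (by fun_prop) (by fun_prop) fun z hz =>
      mul_ne_zero (ne_of_gt hz) fun h => (hR z h).not_gt hz
  exact hquot.congr fun z _ => inv_aztecg R p₀ z

theorem surjOn_inv_aztecg (hp₀ : ∀ z, 0 < z → 0 < p₀.eval z) (hR : ∀ z, R.IsRoot z → z ≤ 0)
    (hX : ¬ X ^ 2 ∣ p₀) (hdeg : 2 * R.natDegree < p₀.natDegree) :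
    Set.SurjOn (aztecg R p₀)⁻¹ (Set.Ioi 0) Set.univ := by
  wlog hlead : R.leadingCoeff ≤ 0 generalizing R
  · intro y _
    obtain ⟨z, hz, hzy⟩ := this (R := -R) (by simpa [IsRoot] using hR)
      (by simpa using hdeg) (by simpa using (not_le.mp hlead).le) (Set.mem_univ (-y))
    exact ⟨z, hz, by simpa [aztecg_neg, inv_neg] using hzy⟩
  have hRneg : ∀ z, 0 < z → R.eval z < 0 := fun z hz =>
    eval_lt_zero_of_roots_lt_of_leadingCoeff_nonpos (fun y hy => (hR y hy).trans_lt hz) hlead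
  exact isPreconnected_Ioi.intermediate_value_Iii
    (l₁ := atTop) (l₂ := nhdsWithin 0 (Set.Ioi 0))
    (le_principal_iff.mpr (Ioi_mem_atTop 0)) inf_le_right (continuousOn_inv_aztecg hR)
    (tendsto_inv_aztecg_atTop hp₀ hRneg hdeg) (tendsto_inv_aztecg_nhdsGT_zero hp₀ hRneg hX)

theorem image_aztecg (hp₀ : ∀ z, 0 < z → 0 < p₀.eval z) (hR : ∀ z, R.IsRoot z → z ≤ 0)
    (hX : ¬ X ^ 2 ∣ p₀) (hdeg : 2 * R.natDegree < p₀.natDegree) :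
    aztecg R p₀ '' (Set.Ioi 0 \ {1}) = {y | y ≠ 0} := by
  refine Set.Subset.antisymm ?_ fun y hy => ?_
  · rintro _ ⟨z, hz, rfl⟩
    exact aztecg_ne_zero hp₀ hR hz
  · obtain ⟨z, hz, hzy⟩ := surjOn_inv_aztecg hp₀ hR hX hdeg (Set.mem_univ y⁻¹)
    have hgz : aztecg R p₀ z = y := inv_injective hzy
    refine ⟨z, ⟨hz, ?_⟩, hgz⟩
    rintro rfl
    exact hy (hgz.symm.trans (aztecg_one R p₀))

end Aztecg

theorem stmt16_general {k : ℕ} (hk : 1 ≤ k) {α β : Fin k → ℝ} (hα : ∀ m, 0 < α m)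
    (hβ : ∀ m, 0 < β m) {t : ℝ[X]} (ht : ∀ z : ℂ, aeval z t = (aztecT α β z).trace)
    {R p₀ : ℝ[X]} (hR : R ∣ (X - 1) * derivative t - C (k : ℝ) * t)
    (hlead : 0 ≤ p₀.leadingCoeff) (hroots : ∀ z, p₀.IsRoot z → z ≤ 0) (hX : ¬ X ^ 2 ∣ p₀)
    (hdeg : 2 * R.natDegree < p₀.natDegree) :
    (∀ z ∈ Set.Ioi (0 : ℝ) \ {1}, 0 < p₀.eval z) ∧
    (∀ z ∈ Set.Ioi (0 : ℝ) \ {1}, aztecg R p₀ z ≠ 0) ∧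
    aztecg R p₀ '' (Set.Ioi (0 : ℝ) \ {1}) = {y : ℝ | y ≠ 0} ∧
    Tendsto (aztecg R p₀) (nhdsWithin 0 (Set.Ioi 0)) (nhds 0) ∧
    Tendsto (aztecg R p₀) atTop (nhds 0) := by
  have hp₀ : ∀ z, 0 < z → 0 < p₀.eval z := fun z hz =>
    zero_lt_eval_of_roots_lt_of_leadingCoeff_nonneg (fun y hy => (hroots y hy).trans_lt hz) hlead
  have hRroots : ∀ z, R.IsRoot z → z ≤ 0 := fun z =>
    nonpos_of_isRoot_of_dvd_derivative_trace hk hα hβ ht hR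
  exact ⟨fun z hz => hp₀ z hz.1, fun z => aztecg_ne_zero hp₀ hRroots,
    image_aztecg hp₀ hRroots hX hdeg, tendsto_aztecg_nhdsGT_zero hp₀ hX,
    tendsto_aztecg_atTop hp₀ hdeg⟩

/-- on `I₀ = (0,∞)∖{1}`, `p₀ > 0`, `g` never vanishes, `g(I₀) = ℝ∖{0}`,
and `g(z) → 0` as `z → 0⁺` and as `z → ∞`. -/
theorem stmt16 (k : ℕ) (hk : 1 ≤ k) (α β : Fin k → ℝ)
    (hα : ∀ m, 0 < α m) (hβ : ∀ m, 0 < β m)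
    (hprod : ∏ m, α m = ∏ m, β m)
    (trT p : Polynomial ℝ)
    (htr : ∀ z : ℂ, Polynomial.aeval z trT = Matrix.trace (aztecT α β z))
    (hp : ∀ z : ℂ, Polynomial.aeval z p
        = (Matrix.trace (aztecT α β z)) ^ 2 - 4 * (z - 1) ^ (2 * k))
    (k' : ℕ) (hk'1 : 1 ≤ k') (hk'k : k' ≤ k)
    (q p₀ : Polynomial ℝ) (hq : q.Monic) (hp₀sf : Squarefree p₀)
    (hp₀lead : 0 < p₀.leadingCoeff) (hfact : p = q ^ 2 * p₀)
    (hp₀deg : p₀.natDegree = 2 * k' - 1)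
    (x : Fin (2 * k' - 1) → ℝ) (hx0 : x ⟨0, by omega⟩ = 0) (hxanti : StrictAnti x)
    (hxroot : ∀ i, p₀.eval (x i) = 0)
    (R : Polynomial ℝ)
    (hR : (X - 1) * Polynomial.derivative trT - Polynomial.C (k : ℝ) * trT = q * R)
    (hRdeg : R.natDegree = k' - 1) :
    (∀ z ∈ Set.Ioi (0 : ℝ) \ {1}, 0 < p₀.eval z) ∧
    (∀ z ∈ Set.Ioi (0 : ℝ) \ {1}, aztecg R p₀ z ≠ 0) ∧
    aztecg R p₀ '' (Set.Ioi (0 : ℝ) \ {1}) = {y : ℝ | y ≠ 0} ∧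
    Tendsto (aztecg R p₀) (nhdsWithin 0 (Set.Ioi 0)) (nhds 0) ∧
    Tendsto (aztecg R p₀) atTop (nhds 0) := by
  have hp₀0 : p₀ ≠ 0 := leadingCoeff_ne_zero.mp hp₀lead.ne'
  exact stmt16_general hk hα hβ htr (Dvd.intro_left q hR.symm) hp₀lead.le
    (fun z hz => hx0 ▸ isRoot_le_of_strictAnti _ hp₀0 hp₀deg.le hxanti hxroot hz)
    (fun h => not_isUnit_X (hp₀sf X (by rwa [← sq]))) (by omega)
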